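/- arXiv:1102.4371 — 3 statements merged into one kernel-verified Lean document; each statement's English description precedes it below -/
import Mathlib

section
/- For every integer m ≥ 1, every real λ ≥ 0 and every real x ≥ 0, G_{m,λ}(x) − G_{m+2,λ}(x) = 2 g_{m+2,λ}(x). -/
/-!
The central densities satisfy `2 f_{n+2}' = f_n - f_{n+2}` on `(0, ∞)`, and `f_{n+2}` extends
continuously by `0` to the origin, so the fundamental theorem of calculus gives
`F_n(x) - F_{n+2}(x) = 2 f_{n+2}(x)` for the central distribution functions `F_n(x) = ∫_0^x f_n`
(`integral_chisqPDF_sub`). Integrating the Poisson mixture term by term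
(`hasSum_ncChisqCDF`) and summing this identity against the weights proves the theorem.

The termwise integration only needs the integrals of the terms to be summable. As
`F_n - F_{n+2} = 2 f_{n+2} ≥ 0`, they are bounded by the Poisson weights times `F_m(x)`.
-/

/-- The chi-square density with `m` degrees of freedom:
`f_m(x) = x^(m/2-1) e^(-x/2) / (2^(m/2) Γ(m/2))` for `x > 0`, and `0` otherwise. -/
noncomputable def chisqPDF (m : ℕ) (x : ℝ) : ℝ :=
  if 0 < x then
    x ^ ((m : ℝ) / 2 - 1) * Real.exp (-x / 2) /
      (2 ^ ((m : ℝ) / 2) * Real.Gamma ((m : ℝ) / 2))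
  else 0

/-- The noncentral chi-square density with `m` degrees of freedom and
noncentrality parameter `lam`:
`g_{m,λ}(x) = Σ_{j=0}^∞ [e^{-λ/2} (λ/2)^j / j!] f_{m+2j}(x)`. -/
noncomputable def ncChisqPDF (m : ℕ) (lam x : ℝ) : ℝ :=
  ∑' j : ℕ, Real.exp (-lam / 2) * (lam / 2) ^ j / (Nat.factorial j : ℝ) *
    chisqPDF (m + 2 * j) x

/-- The noncentral chi-square distribution function
`G_{m,λ}(x) = ∫_0^x g_{m,λ}(u) du`. -/
noncomputable def ncChisqCDF (m : ℕ) (lam x : ℝ) : ℝ :=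
  ∫ u in (0 : ℝ)..x, ncChisqPDF m lam u

open MeasureTheory Set

lemma chisqPDF_nonneg (n : ℕ) (x : ℝ) : 0 ≤ chisqPDF n x := by
  unfold chisqPDF
  split_ifs with h
  · have : 0 ≤ Real.Gamma ((n : ℝ) / 2) := Real.Gamma_nonneg_of_nonneg (by positivity)
    positivity
  · exact le_rfl

lemma intervalIntegrable_chisqPDF {n : ℕ} (hn : 1 ≤ n) {x : ℝ} (hx : 0 ≤ x) :
    IntervalIntegrable (chisqPDF n) volume 0 x := by
  have hn' : (1 : ℝ) ≤ n := by exact_mod_cast hn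
  have h1 : IntervalIntegrable (fun u : ℝ => u ^ ((n : ℝ) / 2 - 1)) volume 0 x :=
    intervalIntegral.intervalIntegrable_rpow' (by linarith)
  have h2 : IntervalIntegrable (fun u : ℝ => u ^ ((n : ℝ) / 2 - 1) *
      (Real.exp (-u / 2) / (2 ^ ((n : ℝ) / 2) * Real.Gamma ((n : ℝ) / 2)))) volume 0 x :=
    h1.mul_continuousOn (by fun_prop)
  refine h2.congr fun u hu => ?_
  rw [uIoc_of_le hx] at hu
  simp only [chisqPDF, if_pos hu.1, mul_div_assoc]

/-- Without the case distinction the formula for `f_{n+2}` is also valid at the origin, because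
the exponent `n / 2` is positive. -/
lemma chisqPDF_add_two {n : ℕ} (hn : 1 ≤ n) {u : ℝ} (hu : 0 ≤ u) :
    chisqPDF (n + 2) u = u ^ ((n : ℝ) / 2) * Real.exp (-u / 2) /
      (2 ^ ((n : ℝ) / 2) * Real.Gamma ((n : ℝ) / 2) * n) := by
  have hn' : (0 : ℝ) < n := by exact_mod_cast hn
  rcases hu.eq_or_lt with rfl | hu
  · rw [Real.zero_rpow (by positivity)]
    simp [chisqPDF]
  · have e : ((n + 2 : ℕ) : ℝ) / 2 = (n : ℝ) / 2 + 1 := by push_cast; ring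
    rw [chisqPDF, if_pos hu, e, Real.Gamma_add_one (by positivity),
      Real.rpow_add_one (by norm_num), add_sub_cancel_right]
    congr 1
    ring

lemma hasDerivAt_two_mul_chisqPDF {n : ℕ} (hn : 1 ≤ n) {u : ℝ} (hu : 0 < u) :
    HasDerivAt (fun v => 2 * chisqPDF (n + 2) v) (chisqPDF n u - chisqPDF (n + 2) u) u := by
  have hn' : (0 : ℝ) < n := by exact_mod_cast hn
  have hG : 0 < Real.Gamma ((n : ℝ) / 2) := Real.Gamma_pos_of_pos (by positivity)
  have h2 : (0 : ℝ) < 2 ^ ((n : ℝ) / 2) := by positivity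
  have hp : HasDerivAt (fun v : ℝ => v ^ ((n : ℝ) / 2)) _ u :=
    Real.hasDerivAt_rpow_const (Or.inl hu.ne')
  have he : HasDerivAt (fun v : ℝ => Real.exp (-v / 2)) _ u :=
    ((hasDerivAt_id u).neg.div_const 2).exp
  have h := ((hp.mul he).div_const
    (2 ^ ((n : ℝ) / 2) * Real.Gamma ((n : ℝ) / 2) * n)).const_mul 2
  have h' := h.congr_of_eventuallyEq (f₁ := fun v => 2 * chisqPDF (n + 2) v) (by
    filter_upwards [lt_mem_nhds hu] with v hv
    rw [chisqPDF_add_two hn hv.le]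
    rfl)
  refine h'.congr_deriv ?_
  rw [chisqPDF_add_two hn hu.le, chisqPDF, if_pos hu]
  simp only [id, Pi.neg_apply]
  field_simp
  ring

lemma integral_chisqPDF_sub {n : ℕ} (hn : 1 ≤ n) {x : ℝ} (hx : 0 ≤ x) :
    (∫ u in (0 : ℝ)..x, chisqPDF n u) - ∫ u in (0 : ℝ)..x, chisqPDF (n + 2) u =
      2 * chisqPDF (n + 2) x := by
  have i1 := intervalIntegrable_chisqPDF hn hx
  have i2 := intervalIntegrable_chisqPDF (n := n + 2) (by omega) hx
  have hc : ContinuousOn (fun v => 2 * chisqPDF (n + 2) v) (Icc 0 x) := by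
    have : ContinuousOn (fun u : ℝ => 2 * (u ^ ((n : ℝ) / 2) * Real.exp (-u / 2) /
        (2 ^ ((n : ℝ) / 2) * Real.Gamma ((n : ℝ) / 2) * n))) (Icc 0 x) := by
      have := Real.continuous_rpow_const (q := (n : ℝ) / 2) (by positivity)
      fun_prop
    refine this.congr fun u hu => ?_
    simp only [chisqPDF_add_two hn hu.1]
  rw [← intervalIntegral.integral_sub i1 i2,
    intervalIntegral.integral_eq_sub_of_hasDerivAt_of_le hx hc
      (fun u hu => hasDerivAt_two_mul_chisqPDF hn hu.1) (i1.sub i2)]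
  simp [chisqPDF]

lemma integral_chisqPDF_le {n : ℕ} (hn : 1 ≤ n) {x : ℝ} (hx : 0 ≤ x) (j : ℕ) :
    ∫ u in (0 : ℝ)..x, chisqPDF (n + 2 * j) u ≤ ∫ u in (0 : ℝ)..x, chisqPDF n u := by
  induction j with
  | zero => simp
  | succ j ih =>
    have h := integral_chisqPDF_sub (n := n + 2 * j) (by omega) hx
    have h0 := chisqPDF_nonneg (n + 2 * j + 2) x
    rw [show n + 2 * (j + 1) = n + 2 * j + 2 by ring]
    linarith

/-- The noncentral distribution function is the Poisson mixture of the central ones. -/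
lemma hasSum_ncChisqCDF {m : ℕ} (hm : 1 ≤ m) {lam : ℝ} (hlam : 0 ≤ lam) {x : ℝ} (hx : 0 ≤ x) :
    HasSum (fun j : ℕ => Real.exp (-lam / 2) * (lam / 2) ^ j / (Nat.factorial j : ℝ) *
      ∫ u in (0 : ℝ)..x, chisqPDF (m + 2 * j) u) (ncChisqCDF m lam x) := by
  have hw : Summable fun j : ℕ =>
      Real.exp (-lam / 2) * (lam / 2) ^ j / (Nat.factorial j : ℝ) := by
    simpa only [mul_div_assoc] using
      (Real.summable_pow_div_factorial (lam / 2)).mul_left (Real.exp (-lam / 2))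
  have hw0 : ∀ j : ℕ, 0 ≤ Real.exp (-lam / 2) * (lam / 2) ^ j / (Nat.factorial j : ℝ) :=
    fun j => by positivity
  have hI : ∀ j : ℕ, IntegrableOn (chisqPDF (m + 2 * j)) (Ioc 0 x) := fun j =>
    (intervalIntegrable_iff_integrableOn_Ioc_of_le hx).1
      (intervalIntegrable_chisqPDF (by omega) hx)
  have key := hasSum_integral_of_summable_integral_norm (μ := volume.restrict (Ioc 0 x))
    (F := fun (j : ℕ) u => Real.exp (-lam / 2) * (lam / 2) ^ j / (Nat.factorial j : ℝ) *
      chisqPDF (m + 2 * j) u) (fun j => (hI j).const_mul _) ?_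
  · simpa only [ncChisqCDF, ncChisqPDF, intervalIntegral.integral_of_le hx,
      integral_const_mul] using key
  · refine Summable.of_nonneg_of_le (fun j => integral_nonneg fun u => norm_nonneg _)
      (fun j => ?_) (hw.mul_right (∫ u in (0 : ℝ)..x, chisqPDF m u))
    simp only [Real.norm_of_nonneg (mul_nonneg (hw0 j) (chisqPDF_nonneg _ _)),
      integral_const_mul]
    rw [← intervalIntegral.integral_of_le hx]
    exact mul_le_mul_of_nonneg_left (integral_chisqPDF_le hm hx j) (hw0 j)

/-- For every integer `m ≥ 1`, every real `λ ≥ 0` and every real `x ≥ 0`,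
`G_{m,λ}(x) - G_{m+2,λ}(x) = 2 g_{m+2,λ}(x)`. -/
theorem ncChisqCDF_sub_ncChisqCDF_add_two (m : ℕ) (hm : 1 ≤ m) (lam : ℝ)
    (hlam : 0 ≤ lam) (x : ℝ) (hx : 0 ≤ x) :
    ncChisqCDF m lam x - ncChisqCDF (m + 2) lam x = 2 * ncChisqPDF (m + 2) lam x := by
  have h := (hasSum_ncChisqCDF hm hlam hx).sub
    (hasSum_ncChisqCDF (m := m + 2) (by omega) hlam hx)
  rw [← h.tsum_eq, ncChisqPDF, ← tsum_mul_left]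
  refine tsum_congr fun j => ?_
  have hj := integral_chisqPDF_sub (n := m + 2 * j) (by omega) hx
  rw [show m + 2 + 2 * j = m + 2 * j + 2 by ring, ← mul_sub, hj]
  ring
end

section
/- Let a₂(φ) = (1/2) log φ (the normal and inverse Gaussian proper dispersion models). Then for every φ > 0 one has a₂''(φ) = −1/(2φ²) and a₂'''(φ) = 1/φ³. Consequently, for any integer n ≥ 1, taking α₂ = n a₂''(φ) = −n/(2φ²) < 0 and α₂′ = α₃ = n a₂'''(φ) = n/φ³ > 0 in the precision-test setup with ε = φ − φ₀: for every x > 0, Π₂(x) = Π₃(x) < Π₁(x) < Π₄(x) when φ > φ₀, and Π₂(x) = Π₃(x) > Π₁(x) > Π₄(x) when 0 < φ < φ₀. -/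
/-- The order-`n^{-1/2}` local power `1 - G_{1,λ}(x) - Σ_{k=0}^3 b_k G_{1+2k,λ}(x)`
of a test whose expansion coefficients are `b₀ = -(b₁+b₂+b₃), b₁, b₂, b₃`. -/
noncomputable def localPower (b1 b2 b3 lam x : ℝ) : ℝ :=
  1 - ncChisqCDF 1 lam x -
    (-(b1 + b2 + b3) * ncChisqCDF 1 lam x + b1 * ncChisqCDF 3 lam x +
      b2 * ncChisqCDF 5 lam x + b3 * ncChisqCDF 7 lam x)

/-- Local power `Π₁` of the likelihood ratio test of `H₀ : φ = φ₀` in a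
dispersion model, with `λ = -α₂ ε²`. -/
noncomputable def PiLR (α₂ α₂' α₃ ε φ : ℝ) (p : ℕ) (x : ℝ) : ℝ :=
  localPower ((α₂' - α₃) * ε ^ 3 / 2 + p * ε / (2 * φ))
    ((2 * α₃ - 3 * α₂') * ε ^ 3 / 6) 0 (-α₂ * ε ^ 2) x

/-- Local power `Π₂` of the Wald test of `H₀ : φ = φ₀` in a dispersion model. -/
noncomputable def PiWald (α₂ α₂' α₃ ε φ : ℝ) (p : ℕ) (x : ℝ) : ℝ :=
  localPower ((α₂' - α₃) * ε ^ 3 / 2 - α₃ * ε / (2 * α₂) + p * ε / (2 * φ))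
    (-((α₂' - α₃) * ε ^ 3) / 2 + α₃ * ε / (2 * α₂)) (-(α₃ * ε ^ 3) / 6)
    (-α₂ * ε ^ 2) x

/-- Local power `Π₃` of the score test of `H₀ : φ = φ₀` in a dispersion model. -/
noncomputable def PiScore (α₂ α₂' α₃ ε φ : ℝ) (p : ℕ) (x : ℝ) : ℝ :=
  localPower ((α₂' - α₃) * ε ^ 3 / 2 + (2 * α₃ - 3 * α₂') * ε / (2 * α₂) + p * ε / (2 * φ))
    (-((2 * α₃ - 3 * α₂') * ε) / (2 * α₂)) ((2 * α₃ - 3 * α₂') * ε ^ 3 / 6)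
    (-α₂ * ε ^ 2) x

/-- Local power `Π₄` of the gradient test of `H₀ : φ = φ₀` in a dispersion model. -/
noncomputable def PiGrad (α₂ α₂' α₃ ε φ : ℝ) (p : ℕ) (x : ℝ) : ℝ :=
  localPower ((α₂' - α₃) * ε ^ 3 / 2 + α₃ * ε / (4 * α₂) + p * ε / (2 * φ))
    (-((2 * α₂' - α₃) * ε ^ 3) / 4 - α₃ * ε / (4 * α₂)) (α₃ * ε ^ 3 / 12)
    (-α₂ * ε ^ 2) x

lemma chisqPDF_nonneg_s9 {k : ℕ} (hk : 1 ≤ k) (u : ℝ) : 0 ≤ chisqPDF k u := by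
  have h : (0 : ℝ) < (k : ℝ) / 2 := by positivity
  unfold chisqPDF
  split_ifs with hu
  · have := Real.Gamma_pos_of_pos h
    positivity
  · exact le_rfl

lemma chisqPDF_pos {k : ℕ} (hk : 1 ≤ k) {u : ℝ} (hu : 0 < u) : 0 < chisqPDF k u := by
  have h : (0 : ℝ) < (k : ℝ) / 2 := by positivity
  have := Real.Gamma_pos_of_pos h
  rw [chisqPDF, if_pos hu]
  positivity

/-- For `k ≥ 3` the formula for the density on `(0, ∞)` also vanishes at `0`, so there is no
jump at the origin. -/
lemma chisqPDF_continuousOn {k : ℕ} (hk : 3 ≤ k) :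
    ContinuousOn (chisqPDF k) (Set.Ici 0) := by
  have hk' : (0 : ℝ) < (k : ℝ) / 2 - 1 := by
    have : (3 : ℝ) ≤ k := by exact_mod_cast hk
    linarith
  have hc : Continuous fun u : ℝ => u ^ ((k : ℝ) / 2 - 1) * Real.exp (-u / 2) /
      (2 ^ ((k : ℝ) / 2) * Real.Gamma ((k : ℝ) / 2)) := by
    have := Real.continuous_rpow_const hk'.le
    fun_prop
  refine hc.continuousOn.congr fun u hu => ?_
  rcases (Set.mem_Ici.1 hu).eq_or_lt with rfl | h
  · simp [chisqPDF, Real.zero_rpow hk'.ne']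
  · simp [chisqPDF, h]

lemma chisqPDF_hasDerivAt {k : ℕ} (hk : 1 ≤ k) {u : ℝ} (hu : 0 < u) :
    HasDerivAt (chisqPDF (k + 2)) ((chisqPDF k u - chisqPDF (k + 2) u) / 2) u := by
  have hs : (0 : ℝ) < (k : ℝ) / 2 := by positivity
  have hG := Real.Gamma_pos_of_pos hs
  have e1 : ((k + 2 : ℕ) : ℝ) / 2 = (k : ℝ) / 2 + 1 := by push_cast; ring
  have key : HasDerivAt (fun u : ℝ => u ^ ((k : ℝ) / 2) * Real.exp (-u / 2) /
      (2 ^ ((k : ℝ) / 2 + 1) * Real.Gamma ((k : ℝ) / 2 + 1)))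
      ((chisqPDF k u - chisqPDF (k + 2) u) / 2) u := by
    have h1 := Real.hasDerivAt_rpow_const (x := u) (p := (k : ℝ) / 2) (Or.inl hu.ne')
    have h2 : HasDerivAt (fun u : ℝ => Real.exp (-u / 2)) (Real.exp (-u / 2) * (-1 / 2)) u :=
      (((hasDerivAt_id u).neg).div_const 2).exp
    refine ((h1.mul h2).div_const
      (2 ^ ((k : ℝ) / 2 + 1) * Real.Gamma ((k : ℝ) / 2 + 1))).congr_deriv ?_
    simp only [chisqPDF, if_pos hu, e1, add_sub_cancel_right]
    rw [Real.Gamma_add_one hs.ne', Real.rpow_add_one (by norm_num)]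
    field_simp
    ring
  refine key.congr_of_eventuallyEq ?_
  filter_upwards [lt_mem_nhds hu] with v hv
  simp only [chisqPDF, if_pos hv, e1, add_sub_cancel_right]

lemma chisqPDF_intervalIntegrable {k : ℕ} (hk : 3 ≤ k) {x : ℝ} (hx : 0 < x) :
    IntervalIntegrable (chisqPDF k) MeasureTheory.volume 0 x := by
  refine ((chisqPDF_continuousOn hk).mono ?_).intervalIntegrable
  rw [Set.uIcc_of_le hx.le]
  exact Set.Icc_subset_Ici_self

lemma chisqPDF_integral_sub {k : ℕ} (hk : 3 ≤ k) {x : ℝ} (hx : 0 < x) :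
    (∫ u in (0 : ℝ)..x, chisqPDF k u) - (∫ u in (0 : ℝ)..x, chisqPDF (k + 2) u) =
      2 * chisqPDF (k + 2) x := by
  have i1 := chisqPDF_intervalIntegrable hk hx
  have i2 := chisqPDF_intervalIntegrable (k := k + 2) (by omega) hx
  have h := intervalIntegral.integral_eq_sub_of_hasDerivAt_of_le hx.le
    ((chisqPDF_continuousOn (k := k + 2) (by omega)).mono Set.Icc_subset_Ici_self)
    (fun u hu => chisqPDF_hasDerivAt (k := k) (by omega) hu.1) ((i1.sub i2).div_const 2)
  rw [intervalIntegral.integral_div, intervalIntegral.integral_sub i1 i2] at h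
  have h0 : chisqPDF (k + 2) 0 = 0 := by simp [chisqPDF]
  rw [h0] at h
  linarith

lemma chisqPDF_integral_lt {k : ℕ} (hk : 3 ≤ k) {x : ℝ} (hx : 0 < x) :
    (∫ u in (0 : ℝ)..x, chisqPDF (k + 2) u) < ∫ u in (0 : ℝ)..x, chisqPDF k u := by
  have h1 := chisqPDF_integral_sub hk hx
  have h2 := chisqPDF_pos (k := k + 2) (by omega) hx
  linarith

lemma chisqPDF_integral_le {m : ℕ} (hm : 3 ≤ m) {x : ℝ} (hx : 0 < x) (j : ℕ) :
    (∫ u in (0 : ℝ)..x, chisqPDF (m + 2 * j) u) ≤ ∫ u in (0 : ℝ)..x, chisqPDF m u := by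
  induction j with
  | zero => simp
  | succ j ih => exact (chisqPDF_integral_lt (k := m + 2 * j) (by omega) hx).le.trans ih

/-- `G_{m,λ}(x)` is the Poisson mixture of the central distribution functions. -/
lemma ncChisqCDF_hasSum {m : ℕ} (hm : 3 ≤ m) {lam x : ℝ} (hl : 0 ≤ lam) (hx : 0 < x) :
    HasSum (fun j : ℕ => Real.exp (-lam / 2) * (lam / 2) ^ j / (Nat.factorial j : ℝ) *
      ∫ u in (0 : ℝ)..x, chisqPDF (m + 2 * j) u) (ncChisqCDF m lam x) := by
  have hw : ∀ j : ℕ, 0 ≤ Real.exp (-lam / 2) * (lam / 2) ^ j / (Nat.factorial j : ℝ) :=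
    fun j => by positivity
  have hws : Summable fun j : ℕ =>
      Real.exp (-lam / 2) * (lam / 2) ^ j / (Nat.factorial j : ℝ) := by
    simpa only [mul_div_assoc] using
      (Real.summable_pow_div_factorial (lam / 2)).mul_left (Real.exp (-lam / 2))
  have hF : ∀ j : ℕ, 0 ≤ ∫ u in (0 : ℝ)..x, chisqPDF (m + 2 * j) u := fun j =>
    intervalIntegral.integral_nonneg hx.le fun u _ => chisqPDF_nonneg_s9 (by omega) u
  have hint : ∀ j : ℕ, MeasureTheory.Integrable
      (fun u => Real.exp (-lam / 2) * (lam / 2) ^ j / (Nat.factorial j : ℝ) *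
        chisqPDF (m + 2 * j) u) (MeasureTheory.volume.restrict (Set.Ioc 0 x)) := fun j =>
    ((intervalIntegrable_iff_integrableOn_Ioc_of_le hx.le).1
      (chisqPDF_intervalIntegrable (k := m + 2 * j) (by omega) hx)).const_mul _
  have heq : ∀ j : ℕ, (∫ u in Set.Ioc 0 x,
      Real.exp (-lam / 2) * (lam / 2) ^ j / (Nat.factorial j : ℝ) * chisqPDF (m + 2 * j) u) =
      Real.exp (-lam / 2) * (lam / 2) ^ j / (Nat.factorial j : ℝ) *
        ∫ u in (0 : ℝ)..x, chisqPDF (m + 2 * j) u := fun j => by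
    rw [MeasureTheory.integral_const_mul, intervalIntegral.integral_of_le hx.le]
  have hnorm : Summable fun j : ℕ => ∫ u in Set.Ioc 0 x,
      ‖Real.exp (-lam / 2) * (lam / 2) ^ j / (Nat.factorial j : ℝ) *
        chisqPDF (m + 2 * j) u‖ := by
    have hn : ∀ (j : ℕ) (u : ℝ), ‖Real.exp (-lam / 2) * (lam / 2) ^ j / (Nat.factorial j : ℝ) *
        chisqPDF (m + 2 * j) u‖ = Real.exp (-lam / 2) * (lam / 2) ^ j / (Nat.factorial j : ℝ) *
        chisqPDF (m + 2 * j) u := fun j u =>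
      Real.norm_of_nonneg (mul_nonneg (hw j) (chisqPDF_nonneg_s9 (by omega) u))
    simp only [hn, heq]
    exact Summable.of_nonneg_of_le (fun j => mul_nonneg (hw j) (hF j))
      (fun j => mul_le_mul_of_nonneg_left (chisqPDF_integral_le hm hx j) (hw j))
      (hws.mul_right _)
  have h := MeasureTheory.hasSum_integral_of_summable_integral_norm hint hnorm
  simp only [heq] at h
  rw [ncChisqCDF, intervalIntegral.integral_of_le hx.le]
  exact h

/-- The noncentral chi-square distribution function strictly decreases when the degrees of
freedom grow by two. -/
lemma ncChisqCDF_lt {m : ℕ} (hm : 3 ≤ m) {lam x : ℝ} (hl : 0 ≤ lam) (hx : 0 < x) :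
    ncChisqCDF (m + 2) lam x < ncChisqCDF m lam x := by
  have hlt : ∀ j : ℕ, (∫ u in (0 : ℝ)..x, chisqPDF (m + 2 + 2 * j) u) <
      ∫ u in (0 : ℝ)..x, chisqPDF (m + 2 * j) u := fun j => by
    rw [show m + 2 + 2 * j = m + 2 * j + 2 by ring]
    exact chisqPDF_integral_lt (by omega) hx
  -- Strictness is read off at `j = 0`, whose weight is positive even if `lam = 0`.
  refine hasSum_lt (i := 0) (fun j => ?_) ?_ (ncChisqCDF_hasSum (m := m + 2) (by omega) hl hx)
    (ncChisqCDF_hasSum hm hl hx)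
  · exact mul_le_mul_of_nonneg_left (hlt j).le (by positivity)
  · exact mul_lt_mul_of_pos_left (hlt 0) (by simp [Real.exp_pos])

/-- The relations between the four local powers, with `L` the common value of
`Π₁ - Π₃` and `2 (Π₄ - Π₁)`. -/
lemma Pi_differences {φ : ℝ} (hφ : 0 < φ) {n : ℕ} (hn : 1 ≤ n) (p : ℕ) (ε x : ℝ) {L : ℝ}
    (hL : L = ε / φ *
        (ncChisqCDF 3 (-(-(n : ℝ) / (2 * φ ^ 2)) * ε ^ 2) x -
          ncChisqCDF 5 (-(-(n : ℝ) / (2 * φ ^ 2)) * ε ^ 2) x) +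
      (n : ℝ) / φ ^ 3 * ε ^ 3 / 6 *
        (ncChisqCDF 5 (-(-(n : ℝ) / (2 * φ ^ 2)) * ε ^ 2) x -
          ncChisqCDF 7 (-(-(n : ℝ) / (2 * φ ^ 2)) * ε ^ 2) x)) :
    PiWald (-(n : ℝ) / (2 * φ ^ 2)) ((n : ℝ) / φ ^ 3) ((n : ℝ) / φ ^ 3) ε φ p x =
      PiScore (-(n : ℝ) / (2 * φ ^ 2)) ((n : ℝ) / φ ^ 3) ((n : ℝ) / φ ^ 3) ε φ p x ∧
    PiLR (-(n : ℝ) / (2 * φ ^ 2)) ((n : ℝ) / φ ^ 3) ((n : ℝ) / φ ^ 3) ε φ p x =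
      PiScore (-(n : ℝ) / (2 * φ ^ 2)) ((n : ℝ) / φ ^ 3) ((n : ℝ) / φ ^ 3) ε φ p x + L ∧
    PiGrad (-(n : ℝ) / (2 * φ ^ 2)) ((n : ℝ) / φ ^ 3) ((n : ℝ) / φ ^ 3) ε φ p x =
      PiLR (-(n : ℝ) / (2 * φ ^ 2)) ((n : ℝ) / φ ^ 3) ((n : ℝ) / φ ^ 3) ε φ p x + L / 2 := by
  have hn' : (n : ℝ) ≠ 0 := by positivity
  have hr : (n : ℝ) / φ ^ 3 = -(2 / φ) * (-(n : ℝ) / (2 * φ ^ 2)) := by field_simp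
  have hα : -(n : ℝ) / (2 * φ ^ 2) ≠ 0 :=
    div_ne_zero (neg_ne_zero.2 hn') (by positivity)
  subst hL
  unfold PiWald PiScore PiLR PiGrad localPower
  rw [hr]
  generalize -(n : ℝ) / (2 * φ ^ 2) = α at hα ⊢
  generalize ncChisqCDF 1 (-α * ε ^ 2) x = G1
  generalize ncChisqCDF 3 (-α * ε ^ 2) x = G3
  generalize ncChisqCDF 5 (-α * ε ^ 2) x = G5
  generalize ncChisqCDF 7 (-α * ε ^ 2) x = G7
  refine ⟨?_, ?_, ?_⟩ <;> field_simp <;> ring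

lemma deriv_half_log :
    deriv (fun t : ℝ => (1 / 2) * Real.log t) = fun t : ℝ => (1 / 2) * t⁻¹ := by
  funext t
  rw [deriv_const_mul_field, Real.deriv_log]

lemma deriv_deriv_half_log :
    deriv (deriv (fun t : ℝ => (1 / 2) * Real.log t)) = fun t : ℝ => -1 / (2 * t ^ 2) := by
  rw [deriv_half_log]
  funext t
  rw [deriv_const_mul_field, deriv_inv]
  field_simp

lemma deriv_neg_half_inv_sq {φ : ℝ} (hφ : 0 < φ) :
    deriv (fun t : ℝ => -1 / (2 * t ^ 2)) φ = 1 / φ ^ 3 := by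
  have h : HasDerivAt (fun t : ℝ => 2 * t ^ 2) (2 * (2 * φ)) φ := by
    simpa using (hasDerivAt_pow 2 φ).const_mul 2
  have h2 := (hasDerivAt_const φ (-1 : ℝ)).div h (by positivity)
  refine (h2.deriv).trans ?_
  field_simp
  ring

/-- **Normal / inverse Gaussian precision tests.**
For `a₂(φ) = (1/2) log φ` one has `a₂''(φ) = -1/(2φ²)` and `a₂'''(φ) = 1/φ³`
for every `φ > 0`. Consequently, taking `α₂ = n a₂''(φ) = -n/(2φ²) < 0` and
`α₂′ = α₃ = n a₂'''(φ) = n/φ³ > 0` in the precision-test setup with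
`ε = φ - φ₀`, for every `x > 0` the local powers satisfy
`Π₂ = Π₃ < Π₁ < Π₄` when `φ > φ₀`, and `Π₂ = Π₃ > Π₁ > Π₄` when `0 < φ < φ₀`. -/
theorem normal_invGaussian_precision_ordering (φ : ℝ) (hφ : 0 < φ) :
    deriv (deriv (fun t : ℝ => (1 / 2) * Real.log t)) φ = -1 / (2 * φ ^ 2) ∧
    deriv (deriv (deriv (fun t : ℝ => (1 / 2) * Real.log t))) φ = 1 / φ ^ 3 ∧
    ∀ n : ℕ, 1 ≤ n → ∀ p : ℕ, 1 ≤ p → ∀ φ₀ : ℝ, 0 < φ₀ → ∀ x : ℝ, 0 < x →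
      (φ₀ < φ →
        PiWald (-(n : ℝ) / (2 * φ ^ 2)) ((n : ℝ) / φ ^ 3) ((n : ℝ) / φ ^ 3)
            (φ - φ₀) φ p x =
          PiScore (-(n : ℝ) / (2 * φ ^ 2)) ((n : ℝ) / φ ^ 3) ((n : ℝ) / φ ^ 3)
            (φ - φ₀) φ p x ∧
        PiScore (-(n : ℝ) / (2 * φ ^ 2)) ((n : ℝ) / φ ^ 3) ((n : ℝ) / φ ^ 3)
            (φ - φ₀) φ p x <
          PiLR (-(n : ℝ) / (2 * φ ^ 2)) ((n : ℝ) / φ ^ 3) ((n : ℝ) / φ ^ 3)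
            (φ - φ₀) φ p x ∧
        PiLR (-(n : ℝ) / (2 * φ ^ 2)) ((n : ℝ) / φ ^ 3) ((n : ℝ) / φ ^ 3)
            (φ - φ₀) φ p x <
          PiGrad (-(n : ℝ) / (2 * φ ^ 2)) ((n : ℝ) / φ ^ 3) ((n : ℝ) / φ ^ 3)
            (φ - φ₀) φ p x) ∧
      (φ < φ₀ →
        PiWald (-(n : ℝ) / (2 * φ ^ 2)) ((n : ℝ) / φ ^ 3) ((n : ℝ) / φ ^ 3)
            (φ - φ₀) φ p x =
          PiScore (-(n : ℝ) / (2 * φ ^ 2)) ((n : ℝ) / φ ^ 3) ((n : ℝ) / φ ^ 3)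
            (φ - φ₀) φ p x ∧
        PiLR (-(n : ℝ) / (2 * φ ^ 2)) ((n : ℝ) / φ ^ 3) ((n : ℝ) / φ ^ 3)
            (φ - φ₀) φ p x <
          PiScore (-(n : ℝ) / (2 * φ ^ 2)) ((n : ℝ) / φ ^ 3) ((n : ℝ) / φ ^ 3)
            (φ - φ₀) φ p x ∧
        PiGrad (-(n : ℝ) / (2 * φ ^ 2)) ((n : ℝ) / φ ^ 3) ((n : ℝ) / φ ^ 3)
            (φ - φ₀) φ p x <
          PiLR (-(n : ℝ) / (2 * φ ^ 2)) ((n : ℝ) / φ ^ 3) ((n : ℝ) / φ ^ 3)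
            (φ - φ₀) φ p x) := by
  refine ⟨congrFun deriv_deriv_half_log φ, ?_, ?_⟩
  · rw [deriv_deriv_half_log, deriv_neg_half_inv_sq hφ]
  intro n hn p _ φ₀ _ x hx
  obtain ⟨h1, h2, h3⟩ := Pi_differences hφ hn p (φ - φ₀) x rfl
  have hl : 0 ≤ -(-(n : ℝ) / (2 * φ ^ 2)) * (φ - φ₀) ^ 2 := by
    rw [neg_div, neg_neg]
    positivity
  have g35 := sub_pos.2 (ncChisqCDF_lt (m := 3) le_rfl hl hx)
  have g57 := sub_pos.2 (ncChisqCDF_lt (m := 5) (by norm_num) hl hx)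
  have hn' : (0 : ℝ) < n := by exact_mod_cast hn
  have ha : 0 < (n : ℝ) / φ ^ 3 := by positivity
  -- The sign of `Π₁ - Π₃` is that of `ε = φ - φ₀`.
  constructor
  · intro h
    have hε : 0 < φ - φ₀ := sub_pos.2 h
    have c1 := mul_pos (div_pos hε hφ) g35
    have c2 := mul_pos (div_pos (mul_pos ha (pow_pos hε 3)) (by norm_num : (0 : ℝ) < 6)) g57
    exact ⟨h1, by linarith, by linarith⟩
  · intro h
    have hε : φ - φ₀ < 0 := sub_neg.2 h
    have hε3 : (φ - φ₀) ^ 3 < 0 := Odd.pow_neg (by decide) hε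
    have c1 := mul_neg_of_neg_of_pos (div_neg_of_neg_of_pos hε hφ) g35
    have c2 := mul_neg_of_neg_of_pos (div_neg_of_neg_of_pos
      (mul_neg_of_pos_of_neg ha hε3) (by norm_num : (0 : ℝ) < 6)) g57
    exact ⟨h1, by linarith, by linarith⟩
end

section
/- The function φ ↦ I₁(φ) is differentiable, and for every φ > 0 it satisfies I₁'(φ) = I₀(φ) − I₁(φ)/φ. Consequently, the function a₂(φ) = −log I₀(φ) of the von Mises proper dispersion model satisfies a₂''(φ) = r(φ)² + r(φ)/φ − 1 for every φ > 0, where r(φ) = I₁(φ)/I₀(φ). -/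
/-!
Differentiating under the integral sign gives `I₀′ = I₁` and
`I₁′(φ) = (1/π) ∫_0^π e^{φ cos t} cos² t dt`. The function `t ↦ e^{φ cos t} sin t` vanishes at both
endpoints and has derivative `e^{φ cos t} (cos t - φ sin² t)`, so
`∫ e^{φ cos t} cos t = φ ∫ e^{φ cos t} (1 - cos² t)`, i.e. `I₁(φ) = φ (I₀(φ) - I₁′(φ))`.
Since `I₀ > 0`, `a₂′ = -I₁/I₀` on all of `ℝ`, and the quotient rule together with the formula for
`I₁′` gives `a₂″`.
-/

open Real in
/-- The modified Bessel function of the first kind and integer order `j`: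
`I_j(φ) = (1/π) ∫_0^π e^{φ cos t} cos(j t) dt`. -/
noncomputable def besselI (j : ℕ) (φ : ℝ) : ℝ :=
  (1 / π) * ∫ t in (0 : ℝ)..π, Real.exp (φ * Real.cos t) * Real.cos (j * t)

open Real MeasureTheory

/-- Differentiation under the integral sign, with dominating function `e^{|φ| + 1} |g t|` on the
unit ball around `φ`. -/
lemma hasDerivAt_integral_exp_mul_cos (g : ℝ → ℝ) (hg : Continuous g) (φ : ℝ) :
    HasDerivAt (fun x : ℝ => ∫ t in (0 : ℝ)..π, Real.exp (x * Real.cos t) * g t)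
      (∫ t in (0 : ℝ)..π, Real.exp (φ * Real.cos t) * (Real.cos t * g t)) φ := by
  refine (intervalIntegral.hasDerivAt_integral_of_dominated_loc_of_deriv_le
    (F := fun x t => Real.exp (x * Real.cos t) * g t)
    (F' := fun x t => Real.exp (x * Real.cos t) * (Real.cos t * g t))
    (bound := fun t => Real.exp (|φ| + 1) * |g t|)
    (Metric.ball_mem_nhds φ one_pos) ?_ ?_ ?_ ?_ ?_ ?_).2
  · exact Filter.Eventually.of_forall fun x =>
      (by fun_prop : Continuous _).aestronglyMeasurable
  · exact (by fun_prop : Continuous _).intervalIntegrable _ _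
  · exact (by fun_prop : Continuous _).aestronglyMeasurable
  · refine Filter.Eventually.of_forall fun t _ x hx => ?_
    have hx' : |x| ≤ |φ| + 1 := by
      rw [Metric.mem_ball, Real.dist_eq] at hx
      have := abs_sub_abs_le_abs_sub x φ
      linarith
    have hc := Real.abs_cos_le_one t
    have hxc : x * Real.cos t ≤ |φ| + 1 := by
      calc x * Real.cos t ≤ |x * Real.cos t| := le_abs_self _
        _ = |x| * |Real.cos t| := abs_mul _ _
        _ ≤ |x| := mul_le_of_le_one_right (abs_nonneg _) hc
        _ ≤ _ := hx'
    rw [Real.norm_eq_abs, abs_mul, abs_mul, abs_of_pos (Real.exp_pos _)]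
    exact mul_le_mul (Real.exp_le_exp.2 hxc) (mul_le_of_le_one_left (abs_nonneg _) hc)
      (by positivity) (by positivity)
  · exact (by fun_prop : Continuous _).intervalIntegrable _ _
  · refine Filter.Eventually.of_forall fun t _ x _ => ?_
    have h := (((hasDerivAt_id x).mul_const (Real.cos t)).exp).mul_const (g t)
    simpa [mul_assoc] using h

lemma besselI_zero_hasDerivAt (φ : ℝ) : HasDerivAt (besselI 0) (besselI 1 φ) φ := by
  have h := (hasDerivAt_integral_exp_mul_cos (fun t => Real.cos ((0 : ℕ) * t))
    (by fun_prop) φ).const_mul (1 / π)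
  have e : besselI 1 φ = 1 / π * ∫ t in (0 : ℝ)..π,
      Real.exp (φ * Real.cos t) * (Real.cos t * Real.cos ((0 : ℕ) * t)) := by
    simp [besselI]
  rw [e]
  exact h

lemma besselI_one_hasDerivAt (φ : ℝ) : HasDerivAt (besselI 1)
    (1 / π * ∫ t in (0 : ℝ)..π, Real.exp (φ * Real.cos t) * Real.cos t ^ 2) φ := by
  have h := (hasDerivAt_integral_exp_mul_cos (fun t => Real.cos ((1 : ℕ) * t))
    (by fun_prop) φ).const_mul (1 / π)
  have e : (∫ t in (0 : ℝ)..π, Real.exp (φ * Real.cos t) * Real.cos t ^ 2) =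
      ∫ t in (0 : ℝ)..π,
        Real.exp (φ * Real.cos t) * (Real.cos t * Real.cos ((1 : ℕ) * t)) := by
    simp [sq]
  rw [e]
  exact h

/-- Integral over `[0, π]` of the derivative of `t ↦ e^{φ cos t} sin t`. -/
lemma integral_exp_mul_cos_eq (φ : ℝ) :
    (∫ t in (0 : ℝ)..π, Real.exp (φ * Real.cos t) * Real.cos t) =
      φ * ((∫ t in (0 : ℝ)..π, Real.exp (φ * Real.cos t)) -
        ∫ t in (0 : ℝ)..π, Real.exp (φ * Real.cos t) * Real.cos t ^ 2) := by
  have hd : ∀ t ∈ Set.uIcc (0 : ℝ) π,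
      HasDerivAt (fun t => Real.exp (φ * Real.cos t) * Real.sin t)
        (Real.exp (φ * Real.cos t) * Real.cos t -
          φ * (Real.exp (φ * Real.cos t) - Real.exp (φ * Real.cos t) * Real.cos t ^ 2)) t := by
    intro t _
    refine ((((Real.hasDerivAt_cos t).const_mul φ).exp).mul (Real.hasDerivAt_sin t)).congr_deriv ?_
    linear_combination (-φ * Real.exp (φ * Real.cos t)) * Real.sin_sq_add_cos_sq t
  have h := intervalIntegral.integral_eq_sub_of_hasDerivAt hd
    ((by fun_prop : Continuous _).intervalIntegrable _ _)
  rw [intervalIntegral.integral_sub ((by fun_prop : Continuous _).intervalIntegrable _ _)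
      ((by fun_prop : Continuous _).intervalIntegrable _ _),
    intervalIntegral.integral_const_mul,
    intervalIntegral.integral_sub ((by fun_prop : Continuous _).intervalIntegrable _ _)
      ((by fun_prop : Continuous _).intervalIntegrable _ _)] at h
  simp only [Real.sin_pi, Real.sin_zero, mul_zero, sub_zero] at h
  linarith

lemma besselI_one_hasDerivAt_of_pos (φ : ℝ) (hφ : 0 < φ) :
    HasDerivAt (besselI 1) (besselI 0 φ - besselI 1 φ / φ) φ := by
  refine (besselI_one_hasDerivAt φ).congr_deriv ?_
  have h := integral_exp_mul_cos_eq φ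
  simp only [besselI, Nat.cast_zero, Nat.cast_one, zero_mul, one_mul, Real.cos_zero, mul_one]
  rw [h]
  field_simp
  ring

lemma besselI_zero_pos (φ : ℝ) : 0 < besselI 0 φ := by
  have h : 0 < ∫ t in (0 : ℝ)..π, Real.exp (φ * Real.cos t) * Real.cos ((0 : ℕ) * t) := by
    refine intervalIntegral.intervalIntegral_pos_of_pos
      ((by fun_prop : Continuous _).intervalIntegrable _ _) (fun t => ?_) Real.pi_pos
    simp [Real.exp_pos]
  exact mul_pos (by positivity) h

/-- `I₁` is differentiable and satisfies `I₁′(φ) = I₀(φ) - I₁(φ)/φ` for `φ > 0`.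
Consequently, `a₂(φ) = -log I₀(φ)` of the von Mises proper dispersion model
satisfies `a₂″(φ) = r(φ)² + r(φ)/φ - 1` for every `φ > 0`, where
`r(φ) = I₁(φ)/I₀(φ)`. -/
theorem besselI_one_deriv (φ : ℝ) (hφ : 0 < φ) :
    Differentiable ℝ (besselI 1) ∧
    deriv (besselI 1) φ = besselI 0 φ - besselI 1 φ / φ ∧
    deriv (deriv (fun t : ℝ => -Real.log (besselI 0 t))) φ =
      (besselI 1 φ / besselI 0 φ) ^ 2 + (besselI 1 φ / besselI 0 φ) / φ - 1 := by
  have h1 := besselI_one_hasDerivAt_of_pos φ hφ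
  refine ⟨fun x => (besselI_one_hasDerivAt x).differentiableAt, h1.deriv, ?_⟩
  have hd : deriv (fun t : ℝ => -Real.log (besselI 0 t)) =
      fun t => -(besselI 1 t / besselI 0 t) := by
    funext t
    exact ((besselI_zero_hasDerivAt t).log (besselI_zero_pos t).ne').neg.deriv
  have h0 := (besselI_zero_pos φ).ne'
  have h2 : HasDerivAt (fun t => -(besselI 1 t / besselI 0 t)) _ φ :=
    (h1.div (besselI_zero_hasDerivAt φ) h0).neg
  rw [hd, h2.deriv]
  field_simp
  ring
end
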